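/- Assume m ≥ 2. Let Û₁ : H → H × H be Û₁ b = (W₁ b + λ₁ b, η₁ b), and set â_{1,n} = sup_{p ∈ ℕ} (β_{1,n,p} + β̃_{1,n,p})² + η_{1,n}² for n ∈ {1, …, m−1} and â_{1,m} = sup_{p ∈ ℕ} (β_{1,m,p} + β̃_{1,m,p})². Define ā_{i,m} = sup_{p ∈ ℕ} ( β_{i,m,p}² + β̃_{i,m,p}² ), and define recursively θ̂_n = √(â_{1,n}) + Σ_{i=2}^n θ̂_{i−1} √(a_{i,n}) for n = 1, …, m−1 and θ̂_m = √(â_{1,m}) + Σ_{i=2}^m θ̂_{i−1} √(ā_{i,m}). Let Ū_m(x, b) = W_m x + λ_m b. Then the network N̂ = R_m ∘ Ū_m ∘ Q_{m−1} ∘ U_{m−1} ∘ ⋯ ∘ Q_1 ∘ Û₁ : H → H is Lipschitz with constant θ̂_m / 2^{m−1}. -/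

import Mathlib

/-!
Write `Qₙ = (Id + Nₙ) / 2`, where the reflection `Nₙ = 2 Qₙ - Id` is nonexpansive because `Qₙ` is
firmly nonexpansive (`norm_reflect_le`, `Qop_firm`). For two inputs `b, b'`, let `Dₖ` be the
difference of the inputs of the activation `Q_{k+1}` and `νₖ` the difference of their images under
`N_{k+1}`. Then `Dₖ₊₁ = ½ Uₖ₊₂ (Dₖ + νₖ)` and `‖νₖ‖ ≤ ‖Dₖ‖`; unrolling the recursion (`unroll`)
gives `2ᵏ Dₖ = Uₖ₊₁ ⋯ U₂ Û₁ (b - b') + ∑_{j<k} 2ʲ Uₖ₊₁ ⋯ U_{j+2} νⱼ`. Strong induction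
(`unroll_norm_le`) yields `‖Dₖ‖ ≤ θ̂_{k+1} / 2ᵏ ‖b - b'‖`, provided the compositions have the norms
that enter `θ̂`. The last layer is the same estimate after projecting to the first component,
followed by the nonexpansive `R_m`.

The norms come from diagonalization: in the `p`-th coordinate, `Uₙ ⋯ Uᵢ` is the matrix
`!![β, β̃; 0, η]` (`inner_fstL_opComp`, `sndL_opComp`). Its squared norm is the largest eigenvalue
of its Gram matrix (`quad_le`), and Parseval sums the coordinatewise bounds (`le_sqrt_iSup_mul`).
The suprema are over bounded families since `|β_p⁽ⁿ⁾| ≤ ‖Wₙ‖` (`abs_diag_le`).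
-/

noncomputable section

open Finset

variable {H : Type*} [NormedAddCommGroup H] [InnerProductSpace ℝ H]

/-- Build the pair `(x, b)` in the `ℓ²` product space `H × H`. -/
def mkP (x b : H) : WithLp 2 (H × H) := (WithLp.equiv 2 (H × H)).symm (x, b)

/-- First component of an element of the product space. -/
def fstP (z : WithLp 2 (H × H)) : H := (WithLp.equiv 2 (H × H) z).1

/-- Second component of an element of the product space. -/
def sndP (z : WithLp 2 (H × H)) : H := (WithLp.equiv 2 (H × H) z).2

/-- `(x, b) ↦ x` as a continuous linear map on the `ℓ²` product. -/
def fstL : WithLp 2 (H × H) →L[ℝ] H :=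
  (ContinuousLinearMap.fst ℝ H H).comp
    (WithLp.prodContinuousLinearEquiv 2 ℝ H H).toContinuousLinearMap

/-- `(x, b) ↦ b` as a continuous linear map on the `ℓ²` product. -/
def sndL : WithLp 2 (H × H) →L[ℝ] H :=
  (ContinuousLinearMap.snd ℝ H H).comp
    (WithLp.prodContinuousLinearEquiv 2 ℝ H H).toContinuousLinearMap

/-- `Uₙ(x, b) = (Wₙ x + λₙ b, ηₙ b)` as a continuous linear map on the product space. -/
def Uop (W : ℕ → H →L[ℝ] H) (lam eta : ℕ → ℝ) (n : ℕ) :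
    WithLp 2 (H × H) →L[ℝ] WithLp 2 (H × H) :=
  ((WithLp.prodContinuousLinearEquiv 2 ℝ H H).symm.toContinuousLinearMap).comp
    (((((W n).comp (ContinuousLinearMap.fst ℝ H H)) + lam n • (ContinuousLinearMap.snd ℝ H H)).prod
        (eta n • (ContinuousLinearMap.snd ℝ H H))).comp
      (WithLp.prodContinuousLinearEquiv 2 ℝ H H).toContinuousLinearMap)

/-- Composition `Aₙ ∘ ⋯ ∘ Aᵢ` (the identity when `n < i`, i.e. when the composition is empty). -/
def opComp {E : Type*} [NormedAddCommGroup E] [NormedSpace ℝ E]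
    (A : ℕ → E →L[ℝ] E) (i : ℕ) : ℕ → (E →L[ℝ] E)
  | 0 => 1
  | n + 1 => if n + 1 < i then 1 else (A (n + 1)).comp (opComp A i n)

/-- `η_{i,j} = η_j ⋯ η_i` if `j ≥ i`, and `1` otherwise. -/
def etaP (eta : ℕ → ℝ) (i j : ℕ) : ℝ := ∏ k ∈ Finset.Icc i j, eta k

/-- `β_{i,n,p} = ∏_{j=i}^n β_p^{(j)}`. -/
def betaC (beta : ℕ → ℕ → ℝ) (i n p : ℕ) : ℝ := ∏ j ∈ Finset.Icc i n, beta j p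

/-- `β̃_{i,n,p} = Σ_{j=i}^{n−1} (∏_{l=j+1}^n β_p^{(l)}) λ_j η_{i,j−1} + λ_n η_{i,n−1}`. -/
def betaT (beta : ℕ → ℕ → ℝ) (lam eta : ℕ → ℝ) (i n p : ℕ) : ℝ :=
  (∑ j ∈ Finset.Icc i (n - 1), (∏ l ∈ Finset.Icc (j + 1) n, beta l p) * lam j * etaP eta i (j - 1))
    + lam n * etaP eta i (n - 1)

/-- The operator `W̃_{i,n} = Σ_{j=i}^{n−1} λ_j η_{i,j−1} (Wₙ ∘ ⋯ ∘ W_{j+1}) + λ_n η_{i,n−1} Id`. -/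
def Wt (W : ℕ → H →L[ℝ] H) (lam eta : ℕ → ℝ) (i n : ℕ) : H →L[ℝ] H :=
  (∑ j ∈ Finset.Icc i (n - 1), (lam j * etaP eta i (j - 1)) • opComp W (j + 1) n)
    + (lam n * etaP eta i (n - 1)) • (1 : H →L[ℝ] H)

/-- `a_{i,n}`. -/
def aC (beta : ℕ → ℕ → ℝ) (lam eta : ℕ → ℝ) (i n : ℕ) : ℝ :=
  (1 / 2) * ⨆ p : ℕ,
    (betaC beta i n p ^ 2 + betaT beta lam eta i n p ^ 2 + etaP eta i n ^ 2
      + Real.sqrt ((betaC beta i n p ^ 2 + betaT beta lam eta i n p ^ 2 + etaP eta i n ^ 2) ^ 2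
          - 4 * betaC beta i n p ^ 2 * etaP eta i n ^ 2))

/-- `ā_{i,n} = sup_p (β_{i,n,p}² + β̃_{i,n,p}²)`. -/
def aBar (beta : ℕ → ℕ → ℝ) (lam eta : ℕ → ℝ) (i n : ℕ) : ℝ :=
  ⨆ p : ℕ, (betaC beta i n p ^ 2 + betaT beta lam eta i n p ^ 2)

/-- `Qₙ(x, b) = (Rₙ x, b)`. -/
def Qop (R : ℕ → H → H) (n : ℕ) (z : WithLp 2 (H × H)) : WithLp 2 (H × H) :=
  mkP (R n (fstP z)) (sndP z)

/-- The virtual network `Qₙ ∘ Uₙ ∘ ⋯ ∘ Q₁ ∘ U₁`. -/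
def net (U : ℕ → WithLp 2 (H × H) →L[ℝ] WithLp 2 (H × H))
    (Q : ℕ → WithLp 2 (H × H) → WithLp 2 (H × H)) :
    ℕ → (WithLp 2 (H × H) → WithLp 2 (H × H))
  | 0 => id
  | n + 1 => fun z => Q (n + 1) (U (n + 1) (net U Q n z))

/-- `Ū_m (x, b) = W_m x + λ_m b` as a continuous linear map to `H`. -/
def Ubar (W : ℕ → H →L[ℝ] H) (lam : ℕ → ℝ) (m : ℕ) : WithLp 2 (H × H) →L[ℝ] H :=
  ((W m).comp fstL) + lam m • sndL

/-- `Û₁ b = (λ₁ b, η₁ b)`. -/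
def Uhat1a (lam eta : ℕ → ℝ) : H →L[ℝ] WithLp 2 (H × H) :=
  ((WithLp.prodContinuousLinearEquiv 2 ℝ H H).symm.toContinuousLinearMap).comp
    ((lam 1 • (1 : H →L[ℝ] H)).prod (eta 1 • (1 : H →L[ℝ] H)))

/-- `Û₁ b = (W₁ b + λ₁ b, η₁ b)`. -/
def Uhat1b (W : ℕ → H →L[ℝ] H) (lam eta : ℕ → ℝ) : H →L[ℝ] WithLp 2 (H × H) :=
  ((WithLp.prodContinuousLinearEquiv 2 ℝ H H).symm.toContinuousLinearMap).comp
    ((W 1 + lam 1 • (1 : H →L[ℝ] H)).prod (eta 1 • (1 : H →L[ℝ] H)))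

/-- The chain `Qₙ ∘ Uₙ ∘ ⋯ ∘ Q₂ ∘ U₂ ∘ Q₁ ∘ Û₁` (for `n ≥ 1`), fed with an input in `H`. -/
def midNet (U : ℕ → WithLp 2 (H × H) →L[ℝ] WithLp 2 (H × H))
    (Q : ℕ → WithLp 2 (H × H) → WithLp 2 (H × H)) (U1 : H → WithLp 2 (H × H)) :
    ℕ → (H → WithLp 2 (H × H))
  | 0 => U1
  | 1 => fun b => Q 1 (U1 b)
  | n + 2 => fun b => Q (n + 2) (U (n + 2) (midNet U Q U1 (n + 1) b))

/-! ### Diagonal operators and Parseval -/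

section Diagonal

/-- A diagonal bounded operator acts coordinatewise. -/
lemma inner_diag_apply (v : HilbertBasis ℕ ℝ H) (T : H →L[ℝ] H) (c : ℕ → ℝ)
    (hT : ∀ p, T (v p) = c p • v p) (p : ℕ) (x : H) :
    inner ℝ (v p) (T x) = c p * inner ℝ (v p) x := by
  have h1 : HasSum (fun q => inner ℝ (v p) (T (v.repr x q • v q))) (inner ℝ (v p) (T x)) :=
    ((v.hasSum_repr x).mapL T).mapL (innerSL ℝ (v p))
  have h2 : HasSum (fun q => inner ℝ (v p) (T (v.repr x q • v q)))
      (inner ℝ (v p) (T (v.repr x p • v p))) := by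
    refine hasSum_single p fun q hq => ?_
    simp [hT, inner_smul_right, v.orthonormal.2 hq.symm]
  rw [h1.unique h2, map_smul, hT, inner_smul_right, inner_smul_right, v.repr_apply_apply,
    real_inner_self_eq_norm_sq, v.orthonormal.1 p]
  ring

lemma abs_diag_le (v : HilbertBasis ℕ ℝ H) (T : H →L[ℝ] H) (c : ℕ → ℝ)
    (hT : ∀ p, T (v p) = c p • v p) (p : ℕ) : |c p| ≤ ‖T‖ := by
  have h := T.le_opNorm (v p)
  rwa [hT, norm_smul, v.orthonormal.1 p, mul_one, mul_one, Real.norm_eq_abs] at h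

lemma hasSum_sq_inner (v : HilbertBasis ℕ ℝ H) (x : H) :
    HasSum (fun p => (inner ℝ (v p) x : ℝ) ^ 2) (‖x‖ ^ 2) := by
  have h := v.hasSum_inner_mul_inner x x
  rw [real_inner_self_eq_norm_sq] at h
  refine h.congr_fun ?_
  intro p
  rw [real_inner_comm x (v p), sq]

lemma norm_sq_prod (z : WithLp 2 (H × H)) : ‖z‖ ^ 2 = ‖fstL z‖ ^ 2 + ‖sndL z‖ ^ 2 :=
  WithLp.prod_norm_sq_eq_of_L2 z

lemma hasSum_sq_prod (v : HilbertBasis ℕ ℝ H) (z : WithLp 2 (H × H)) :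
    HasSum (fun p => (inner ℝ (v p) (fstL z) : ℝ) ^ 2 + (inner ℝ (v p) (sndL z) : ℝ) ^ 2)
      (‖z‖ ^ 2) := by
  rw [norm_sq_prod]
  exact (hasSum_sq_inner v _).add (hasSum_sq_inner v _)

/-- If `s p ≤ c p * t p` termwise with `c` bounded, then the sums of `s` and `t`, read as squares,
satisfy the norm bound with constant `√(sup c)`. -/
lemma le_sqrt_iSup_mul {s t c : ℕ → ℝ} {A B : ℝ} (hs : HasSum s (A ^ 2)) (ht : HasSum t (B ^ 2))
    (hB : 0 ≤ B) (ht0 : ∀ p, 0 ≤ t p) (hc : BddAbove (Set.range c))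
    (h : ∀ p, s p ≤ c p * t p) : A ≤ Real.sqrt (⨆ p, c p) * B := by
  have h1 : A ^ 2 ≤ (⨆ p, c p) * B ^ 2 :=
    hasSum_le (fun p => (h p).trans
      (mul_le_mul_of_nonneg_right (le_ciSup hc p) (ht0 p))) hs (ht.mul_left _)
  refine (Real.le_sqrt_of_sq_le h1).trans ?_
  rw [Real.sqrt_mul' _ (sq_nonneg B), Real.sqrt_sq hB]

end Diagonal

/-- The largest eigenvalue of `MᵀM` for `M = !![β, t; 0, e]` bounds the quadratic form of `MᵀM`. -/
lemma quad_le (β t e x b : ℝ) :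
    (β * x + t * b) ^ 2 + (e * b) ^ 2 ≤
      (1 / 2) * (β ^ 2 + t ^ 2 + e ^ 2
        + Real.sqrt ((β ^ 2 + t ^ 2 + e ^ 2) ^ 2 - 4 * β ^ 2 * e ^ 2)) * (x ^ 2 + b ^ 2) := by
  have hd : (β ^ 2 - t ^ 2 - e ^ 2) ^ 2 ≤ (β ^ 2 + t ^ 2 + e ^ 2) ^ 2 - 4 * β ^ 2 * e ^ 2 := by
    nlinarith [sq_nonneg (β * t)]
  have habs := abs_le.1 (Real.abs_le_sqrt hd)
  have hsq := Real.sq_sqrt ((sq_nonneg _).trans hd)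
  set r := Real.sqrt ((β ^ 2 + t ^ 2 + e ^ 2) ^ 2 - 4 * β ^ 2 * e ^ 2)
  obtain ⟨M, hM⟩ : ∃ M, M = (1 / 2) * (β ^ 2 + t ^ 2 + e ^ 2 + r) := ⟨_, rfl⟩
  have hP : 0 ≤ M - β ^ 2 := by linarith [habs.1]
  have hPQ : (M - β ^ 2) * (M - t ^ 2 - e ^ 2) = (β * t) ^ 2 := by
    rw [hM]; nlinarith [hsq]
  have hQ : 0 ≤ M - t ^ 2 - e ^ 2 := by linarith [habs.2]
  rw [← hM]
  suffices h : 0 ≤ (M - β ^ 2) * x ^ 2 - 2 * (β * t) * (x * b) + (M - t ^ 2 - e ^ 2) * b ^ 2 by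
    nlinarith [h]
  rcases hP.eq_or_lt with h0 | h0
  · have hbt : β * t = 0 := by
      rw [← h0, zero_mul] at hPQ
      exact pow_eq_zero_iff two_ne_zero |>.1 hPQ.symm
    rw [← h0, hbt]
    nlinarith [mul_nonneg hQ (sq_nonneg b)]
  · refine nonneg_of_mul_nonneg_right ?_ h0
    have : (M - β ^ 2) * ((M - β ^ 2) * x ^ 2 - 2 * (β * t) * (x * b)
        + (M - t ^ 2 - e ^ 2) * b ^ 2) = ((M - β ^ 2) * x - β * t * b) ^ 2 := by
      linear_combination b ^ 2 * hPQ
    rw [this]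
    exact sq_nonneg _

/-! ### Boundedness of the coefficients -/

section Bounded

lemma betaC_bdd {m : ℕ} {beta : ℕ → ℕ → ℝ} {C : ℕ → ℝ}
    (hC : ∀ n, 1 ≤ n → n ≤ m → ∀ p, |beta n p| ≤ C n) (i n : ℕ) (hi : 1 ≤ i) (hn : n ≤ m) (p : ℕ) :
    |betaC beta i n p| ≤ ∏ j ∈ Finset.Icc i n, C j := by
  rw [betaC, Finset.abs_prod]
  refine Finset.prod_le_prod (fun _ _ => abs_nonneg _) fun j hj => ?_
  rw [Finset.mem_Icc] at hj
  exact hC j (hi.trans hj.1) (hj.2.trans hn) p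

lemma betaT_bdd {m : ℕ} {beta : ℕ → ℕ → ℝ} {C : ℕ → ℝ} (lam eta : ℕ → ℝ)
    (hC : ∀ n, 1 ≤ n → n ≤ m → ∀ p, |beta n p| ≤ C n) (i n : ℕ) (hn : n ≤ m) :
    ∃ K, ∀ p, |betaT beta lam eta i n p| ≤ K := by
  refine ⟨(∑ j ∈ Finset.Icc i (n - 1), (∏ l ∈ Finset.Icc (j + 1) n, C l) * |lam j|
    * |etaP eta i (j - 1)|) + |lam n * etaP eta i (n - 1)|, fun p => ?_⟩
  refine (abs_add_le _ _).trans (add_le_add_left ((Finset.abs_sum_le_sum_abs _ _).trans ?_) _)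
  refine Finset.sum_le_sum fun j _ => ?_
  rw [abs_mul, abs_mul]
  gcongr
  exact betaC_bdd hC (j + 1) n (by omega) hn p

end Bounded

/-! ### Coordinates of the compositions -/

section Compositions

lemma opComp_of_lt {E : Type*} [NormedAddCommGroup E] [NormedSpace ℝ E]
    (A : ℕ → E →L[ℝ] E) {i n : ℕ} (h : n < i) : opComp A i n = 1 := by
  cases n with
  | zero => rfl
  | succ n => simp [opComp, h]

lemma opComp_succ_apply {E : Type*} [NormedAddCommGroup E] [NormedSpace ℝ E]
    (A : ℕ → E →L[ℝ] E) {i n : ℕ} (h : i ≤ n + 1) (z : E) :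
    opComp A i (n + 1) z = A (n + 1) (opComp A i n z) := by
  simp [opComp, not_lt.2 h]

lemma opComp_one_apply {E : Type*} [NormedAddCommGroup E] [NormedSpace ℝ E]
    (A : ℕ → E →L[ℝ] E) (n : ℕ) (z : E) :
    opComp A 1 (n + 1) z = opComp A 2 (n + 1) (A 1 z) := by
  induction n with
  | zero => rfl
  | succ n ih =>
    rw [opComp_succ_apply A (show 1 ≤ n + 1 + 1 by omega), ih,
      opComp_succ_apply A (show 2 ≤ n + 1 + 1 by omega)]

lemma fstL_Uop (W : ℕ → H →L[ℝ] H) (lam eta : ℕ → ℝ) (n : ℕ) (z : WithLp 2 (H × H)) :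
    fstL (Uop W lam eta n z) = W n (fstL z) + lam n • sndL z := rfl

lemma sndL_Uop (W : ℕ → H →L[ℝ] H) (lam eta : ℕ → ℝ) (n : ℕ) (z : WithLp 2 (H × H)) :
    sndL (Uop W lam eta n z) = eta n • sndL z := rfl

lemma etaP_succ (eta : ℕ → ℝ) {i n : ℕ} (h : i ≤ n + 1) :
    etaP eta i (n + 1) = etaP eta i n * eta (n + 1) :=
  Finset.prod_Icc_succ_top h _

lemma betaC_succ (beta : ℕ → ℕ → ℝ) {i n : ℕ} (h : i ≤ n + 1) (p : ℕ) :
    betaC beta i (n + 1) p = betaC beta i n p * beta (n + 1) p :=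
  Finset.prod_Icc_succ_top h _

lemma betaT_succ (beta : ℕ → ℕ → ℝ) (lam eta : ℕ → ℝ) {i n : ℕ} (hi : 1 ≤ i) (h : i ≤ n) (p : ℕ) :
    betaT beta lam eta i (n + 1) p
      = beta (n + 1) p * betaT beta lam eta i n p + lam (n + 1) * etaP eta i n := by
  obtain ⟨k, rfl⟩ : ∃ k, n = k + 1 := ⟨n - 1, by omega⟩
  simp only [betaT, Nat.add_sub_cancel]
  rw [Finset.sum_Icc_succ_top h, Finset.Icc_self, Finset.prod_singleton, mul_add, Finset.mul_sum,
    Nat.add_sub_cancel]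
  congr 1
  congr 1
  · refine Finset.sum_congr rfl fun j hj => ?_
    rw [Finset.mem_Icc] at hj
    rw [Finset.prod_Icc_succ_top (show j + 1 ≤ k + 1 + 1 by omega)]
    ring
  · ring

lemma betaT_self (beta : ℕ → ℕ → ℝ) (lam eta : ℕ → ℝ) {i : ℕ} (hi : 1 ≤ i) (p : ℕ) :
    betaT beta lam eta i i p = lam i := by
  have h : Finset.Icc i (i - 1) = ∅ := Finset.Icc_eq_empty (by omega)
  simp [betaT, etaP, h]

lemma sndL_opComp (W : ℕ → H →L[ℝ] H) (lam eta : ℕ → ℝ) (i n : ℕ) (hi : 1 ≤ i)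
    (hin : i ≤ n) (z : WithLp 2 (H × H)) :
    sndL (opComp (Uop W lam eta) i n z) = etaP eta i n • sndL z := by
  induction n, hin using Nat.le_induction with
  | base =>
    obtain ⟨k, rfl⟩ : ∃ k, i = k + 1 := ⟨i - 1, by omega⟩
    rw [opComp_succ_apply _ le_rfl, opComp_of_lt _ (Nat.lt_succ_self k), sndL_Uop]
    simp [etaP]
  | succ n hn ih =>
    rw [opComp_succ_apply _ (by omega), sndL_Uop, ih, etaP_succ eta (by omega), smul_smul, mul_comm]

/-- In the `p`-th coordinate, `Uₙ ∘ ⋯ ∘ Uᵢ` is the matrix `!![β, β̃; 0, η]`; this is its first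
row. -/
lemma inner_fstL_opComp (v : HilbertBasis ℕ ℝ H) {m : ℕ} (W : ℕ → H →L[ℝ] H)
    (beta : ℕ → ℕ → ℝ) (lam eta : ℕ → ℝ)
    (hW : ∀ n, 1 ≤ n → n ≤ m → ∀ p : ℕ, W n (v p) = beta n p • v p)
    (i n : ℕ) (hi : 1 ≤ i) (hin : i ≤ n) (hn : n ≤ m) (z : WithLp 2 (H × H)) (p : ℕ) :
    inner ℝ (v p) (fstL (opComp (Uop W lam eta) i n z))
      = betaC beta i n p * inner ℝ (v p) (fstL z)
        + betaT beta lam eta i n p * inner ℝ (v p) (sndL z) := by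
  induction n, hin using Nat.le_induction with
  | base =>
    rw [betaT_self _ _ _ hi]
    obtain ⟨k, rfl⟩ : ∃ k, i = k + 1 := ⟨i - 1, by omega⟩
    rw [opComp_succ_apply _ le_rfl, opComp_of_lt _ (Nat.lt_succ_self k), fstL_Uop, inner_add_right,
      inner_smul_right, inner_diag_apply v _ _ (hW _ hi hn)]
    simp [betaC]
  | succ n hin ih =>
    rw [opComp_succ_apply _ (by omega), fstL_Uop, inner_add_right, inner_smul_right,
      inner_diag_apply v _ _ (hW _ (by omega) hn), ih (by omega), sndL_opComp _ _ _ _ _ hi hin,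
      betaC_succ _ (by omega), betaT_succ _ _ _ hi hin, inner_smul_right]
    ring

end Compositions

/-! ### Norm bounds for the compositions -/

section NormBounds

lemma norm_opComp_le (v : HilbertBasis ℕ ℝ H) {m : ℕ} (W : ℕ → H →L[ℝ] H)
    (beta : ℕ → ℕ → ℝ) (lam eta : ℕ → ℝ)
    (hW : ∀ n, 1 ≤ n → n ≤ m → ∀ p : ℕ, W n (v p) = beta n p • v p)
    (i n : ℕ) (hi : 1 ≤ i) (hin : i ≤ n) (hn : n ≤ m) (z : WithLp 2 (H × H)) :
    ‖opComp (Uop W lam eta) i n z‖ ≤ Real.sqrt (aC beta lam eta i n) * ‖z‖ := by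
  have hC : ∀ n, 1 ≤ n → n ≤ m → ∀ p, |beta n p| ≤ ‖W n‖ := fun n h1 h2 p =>
    abs_diag_le v _ _ (hW n h1 h2) p
  obtain ⟨K, hK⟩ := betaT_bdd lam eta hC i n hn
  rw [aC, Real.mul_iSup_of_nonneg (by norm_num)]
  refine le_sqrt_iSup_mul (hasSum_sq_prod v _) (hasSum_sq_prod v z) (norm_nonneg _)
    (fun p => by positivity) ?_ fun p => ?_
  · refine ⟨(∏ j ∈ Finset.Icc i n, ‖W j‖) ^ 2 + K ^ 2 + etaP eta i n ^ 2, ?_⟩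
    rintro _ ⟨p, rfl⟩
    have h1 := sq_le_sq' (abs_le.1 (betaC_bdd hC i n hi hn p)).1
      (abs_le.1 (betaC_bdd hC i n hi hn p)).2
    have h2 := sq_le_sq' (abs_le.1 (hK p)).1 (abs_le.1 (hK p)).2
    have h3 : Real.sqrt ((betaC beta i n p ^ 2 + betaT beta lam eta i n p ^ 2
        + etaP eta i n ^ 2) ^ 2 - 4 * betaC beta i n p ^ 2 * etaP eta i n ^ 2)
        ≤ betaC beta i n p ^ 2 + betaT beta lam eta i n p ^ 2 + etaP eta i n ^ 2 := by
      refine Real.sqrt_le_iff.2 ⟨by positivity, ?_⟩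
      have : 0 ≤ 4 * betaC beta i n p ^ 2 * etaP eta i n ^ 2 := by positivity
      linarith
    dsimp only
    linarith
  · rw [inner_fstL_opComp v W beta lam eta hW i n hi hin hn, sndL_opComp _ _ _ _ _ hi hin,
      inner_smul_right]
    exact quad_le _ _ _ _ _

lemma norm_fstL_opComp_le (v : HilbertBasis ℕ ℝ H) {m : ℕ} (W : ℕ → H →L[ℝ] H)
    (beta : ℕ → ℕ → ℝ) (lam eta : ℕ → ℝ)
    (hW : ∀ n, 1 ≤ n → n ≤ m → ∀ p : ℕ, W n (v p) = beta n p • v p)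
    (i n : ℕ) (hi : 1 ≤ i) (hin : i ≤ n) (hn : n ≤ m) (z : WithLp 2 (H × H)) :
    ‖fstL (opComp (Uop W lam eta) i n z)‖ ≤ Real.sqrt (aBar beta lam eta i n) * ‖z‖ := by
  have hC : ∀ n, 1 ≤ n → n ≤ m → ∀ p, |beta n p| ≤ ‖W n‖ := fun n h1 h2 p =>
    abs_diag_le v _ _ (hW n h1 h2) p
  obtain ⟨K, hK⟩ := betaT_bdd lam eta hC i n hn
  refine le_sqrt_iSup_mul (hasSum_sq_inner v _) (hasSum_sq_prod v z) (norm_nonneg _)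
    (fun p => by positivity) ?_ fun p => ?_
  · refine ⟨(∏ j ∈ Finset.Icc i n, ‖W j‖) ^ 2 + K ^ 2, ?_⟩
    rintro _ ⟨p, rfl⟩
    have h1 := sq_le_sq' (abs_le.1 (betaC_bdd hC i n hi hn p)).1
      (abs_le.1 (betaC_bdd hC i n hi hn p)).2
    have h2 := sq_le_sq' (abs_le.1 (hK p)).1 (abs_le.1 (hK p)).2
    exact add_le_add h1 h2
  · rw [inner_fstL_opComp v W beta lam eta hW i n hi hin hn]
    -- Cauchy–Schwarz in the plane
    nlinarith [sq_nonneg (betaC beta i n p * inner ℝ (v p) (sndL z)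
      - betaT beta lam eta i n p * inner ℝ (v p) (fstL z))]

/-- `(β + β̃)²` is bounded in `p`. -/
lemma exists_sq_add_le (v : HilbertBasis ℕ ℝ H) {m : ℕ} (W : ℕ → H →L[ℝ] H)
    (beta : ℕ → ℕ → ℝ) (lam eta : ℕ → ℝ)
    (hW : ∀ n, 1 ≤ n → n ≤ m → ∀ p : ℕ, W n (v p) = beta n p • v p)
    (i n : ℕ) (hi : 1 ≤ i) (hn : n ≤ m) :
    ∃ K, ∀ p, (betaC beta i n p + betaT beta lam eta i n p) ^ 2 ≤ K := by
  have hC : ∀ n, 1 ≤ n → n ≤ m → ∀ p, |beta n p| ≤ ‖W n‖ := fun n h1 h2 p =>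
    abs_diag_le v _ _ (hW n h1 h2) p
  obtain ⟨K, hK⟩ := betaT_bdd lam eta hC i n hn
  refine ⟨((∏ j ∈ Finset.Icc i n, ‖W j‖) + K) ^ 2, fun p => ?_⟩
  have h := abs_le.1 ((abs_add_le _ _).trans (add_le_add (betaC_bdd hC i n hi hn p) (hK p)))
  exact sq_le_sq' h.1 h.2

/-- `Û₁ b = U₁ (b, b)`, so compositions starting with `Û₁` are compositions starting with `U₁`
restricted to the diagonal. -/
lemma opComp_Uhat1b (W : ℕ → H →L[ℝ] H) (lam eta : ℕ → ℝ) (n : ℕ) (b : H) :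
    opComp (Uop W lam eta) 2 (n + 1) (Uhat1b W lam eta b)
      = opComp (Uop W lam eta) 1 (n + 1) (mkP b b) :=
  (opComp_one_apply (Uop W lam eta) n (mkP b b)).symm

lemma inner_fstL_opComp_Uhat1b (v : HilbertBasis ℕ ℝ H) {m : ℕ} (W : ℕ → H →L[ℝ] H)
    (beta : ℕ → ℕ → ℝ) (lam eta : ℕ → ℝ)
    (hW : ∀ n, 1 ≤ n → n ≤ m → ∀ p : ℕ, W n (v p) = beta n p • v p)
    (n : ℕ) (hn : n + 1 ≤ m) (b : H) (p : ℕ) :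
    inner ℝ (v p) (fstL (opComp (Uop W lam eta) 2 (n + 1) (Uhat1b W lam eta b)))
      = (betaC beta 1 (n + 1) p + betaT beta lam eta 1 (n + 1) p) * inner ℝ (v p) b := by
  rw [opComp_Uhat1b, inner_fstL_opComp v W beta lam eta hW 1 (n + 1) le_rfl (by omega) hn, add_mul]
  rfl

lemma norm_opComp_Uhat1b_le (v : HilbertBasis ℕ ℝ H) {m : ℕ} (W : ℕ → H →L[ℝ] H)
    (beta : ℕ → ℕ → ℝ) (lam eta : ℕ → ℝ)
    (hW : ∀ n, 1 ≤ n → n ≤ m → ∀ p : ℕ, W n (v p) = beta n p • v p)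
    (n : ℕ) (hn : n + 1 ≤ m) (b : H) :
    ‖opComp (Uop W lam eta) 2 (n + 1) (Uhat1b W lam eta b)‖
      ≤ Real.sqrt (⨆ p : ℕ, ((betaC beta 1 (n + 1) p + betaT beta lam eta 1 (n + 1) p) ^ 2
          + etaP eta 1 (n + 1) ^ 2)) * ‖b‖ := by
  obtain ⟨K, hK⟩ := exists_sq_add_le v W beta lam eta hW 1 (n + 1) le_rfl hn
  refine le_sqrt_iSup_mul (hasSum_sq_prod v _) (hasSum_sq_inner v b) (norm_nonneg _)
    (fun p => by positivity) ?_ fun p => ?_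
  · refine ⟨K + etaP eta 1 (n + 1) ^ 2, ?_⟩
    rintro _ ⟨p, rfl⟩
    have := hK p
    dsimp only
    linarith
  · rw [inner_fstL_opComp_Uhat1b v W beta lam eta hW n hn, opComp_Uhat1b,
      sndL_opComp _ _ _ _ _ le_rfl (by omega), inner_smul_right]
    change _ + (etaP eta 1 (n + 1) * inner ℝ (v p) b) ^ 2 ≤ _
    exact le_of_eq (by ring)

lemma norm_fstL_opComp_Uhat1b_le (v : HilbertBasis ℕ ℝ H) {m : ℕ} (W : ℕ → H →L[ℝ] H)
    (beta : ℕ → ℕ → ℝ) (lam eta : ℕ → ℝ)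
    (hW : ∀ n, 1 ≤ n → n ≤ m → ∀ p : ℕ, W n (v p) = beta n p • v p)
    (n : ℕ) (hn : n + 1 ≤ m) (b : H) :
    ‖fstL (opComp (Uop W lam eta) 2 (n + 1) (Uhat1b W lam eta b))‖
      ≤ Real.sqrt (⨆ p : ℕ, (betaC beta 1 (n + 1) p + betaT beta lam eta 1 (n + 1) p) ^ 2)
        * ‖b‖ := by
  obtain ⟨K, hK⟩ := exists_sq_add_le v W beta lam eta hW 1 (n + 1) le_rfl hn
  refine le_sqrt_iSup_mul (hasSum_sq_inner v _) (hasSum_sq_inner v b) (norm_nonneg _)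
    (fun p => by positivity) ⟨K, ?_⟩ fun p => ?_
  · rintro _ ⟨p, rfl⟩
    exact hK p
  · rw [inner_fstL_opComp_Uhat1b v W beta lam eta hW n hn, mul_pow]

end NormBounds

/-! ### Reflections and the unrolled network -/

section Unrolling

/-- The reflection `2Q - Id` of a firmly nonexpansive map is nonexpansive. -/
lemma norm_reflect_le {E : Type*} [NormedAddCommGroup E] [InnerProductSpace ℝ E] {d q : E}
    (h : ‖q‖ ^ 2 + ‖d - q‖ ^ 2 ≤ ‖d‖ ^ 2) : ‖(2 : ℝ) • q - d‖ ≤ ‖d‖ := by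
  have h1 : ‖(2 : ℝ) • q - d‖ ^ 2 = 2 * (‖q‖ ^ 2 + ‖d - q‖ ^ 2) - ‖d‖ ^ 2 := by
    rw [norm_sub_sq_real, norm_sub_sq_real, norm_smul, inner_smul_left, real_inner_comm q d]
    simp only [Real.norm_ofNat, conj_trivial]
    ring
  exact (sq_le_sq₀ (norm_nonneg _) (norm_nonneg _)).1 (by linarith)

/-- The recursion `Dₖ₊₁ = ½ Uₖ₊₂ (Dₖ + νₖ)`, unrolled. -/
lemma unroll {E : Type*} [NormedAddCommGroup E] [NormedSpace ℝ E] (U : ℕ → E →L[ℝ] E)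
    (D ν : ℕ → E) (hD : ∀ k, D (k + 1) = (1 / 2 : ℝ) • U (k + 2) (D k + ν k)) (k : ℕ) :
    (2 : ℝ) ^ k • D k = opComp U 2 (k + 1) (D 0)
      + ∑ j ∈ Finset.range k, (2 : ℝ) ^ j • opComp U (j + 2) (k + 1) (ν j) := by
  induction k with
  | zero => simp [opComp_of_lt U (show 0 + 1 < 2 by norm_num)]
  | succ k ih =>
    have e : (2 : ℝ) ^ (k + 1) • D (k + 1)
        = U (k + 2) ((2 : ℝ) ^ k • D k) + (2 : ℝ) ^ k • U (k + 2) (ν k) := by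
      rw [hD, smul_smul, map_add, map_smul, smul_add, pow_succ]
      congr 2 <;> ring
    rw [e, ih, map_add, map_sum, Finset.sum_range_succ, add_assoc,
      opComp_succ_apply U (show 2 ≤ k + 1 + 1 by omega),
      opComp_succ_apply U (show k + 2 ≤ k + 1 + 1 by omega),
      opComp_of_lt U (show k + 1 < k + 2 by omega)]
    congr 2
    refine Finset.sum_congr rfl fun j hj => ?_
    rw [Finset.mem_range] at hj
    rw [map_smul, opComp_succ_apply U (show j + 2 ≤ k + 1 + 1 by omega)]

/-- Norm estimate for a linear image of the unrolled recursion; it is used both with the identity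
(hidden layers) and with the first projection (last layer). -/
lemma unroll_norm_le {E F : Type*} [NormedAddCommGroup E] [NormedSpace ℝ E]
    [NormedAddCommGroup F] [NormedSpace ℝ F] (L : E →L[ℝ] F) (U : ℕ → E →L[ℝ] E)
    (D ν : ℕ → E) (hD : ∀ k, D (k + 1) = (1 / 2 : ℝ) • U (k + 2) (D k + ν k)) (k : ℕ)
    (B c₀ : ℝ) (c θ : ℕ → ℝ) (h₀ : ‖L (opComp U 2 (k + 1) (D 0))‖ ≤ c₀ * B)
    (hc₀ : ∀ i, 0 ≤ c i)
    (hc : ∀ j < k, ∀ z, ‖L (opComp U (j + 2) (k + 1) z)‖ ≤ c (j + 2) * ‖z‖)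
    (hν : ∀ j < k, ‖ν j‖ ≤ θ (j + 1) / 2 ^ j * B) :
    ‖L (D k)‖ ≤ (c₀ + ∑ i ∈ Finset.Icc 2 (k + 1), θ (i - 1) * c i) / 2 ^ k * B := by
  have hsum : ∑ i ∈ Finset.Icc 2 (k + 1), θ (i - 1) * c i
      = ∑ j ∈ Finset.range k, θ (j + 1) * c (j + 2) := by
    rw [show Finset.Icc 2 (k + 1) = Finset.Ico (0 + 2) (k + 2) from rfl,
      ← Finset.sum_Ico_add', Finset.range_eq_Ico]
    rfl
  have h2 : (0 : ℝ) < 2 ^ k := by positivity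
  have key : 2 ^ k * ‖L (D k)‖ ≤ (c₀ + ∑ j ∈ Finset.range k, θ (j + 1) * c (j + 2)) * B := by
    have e : 2 ^ k * ‖L (D k)‖ = ‖L ((2 : ℝ) ^ k • D k)‖ := by
      rw [map_smul, norm_smul, Real.norm_of_nonneg h2.le]
    rw [e, unroll U D ν hD, map_add, map_sum, add_mul, Finset.sum_mul]
    refine (norm_add_le _ _).trans (add_le_add h₀ ((norm_sum_le _ _).trans
      (Finset.sum_le_sum fun j hj => ?_)))
    rw [Finset.mem_range] at hj
    have h2j : (0 : ℝ) < 2 ^ j := by positivity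
    rw [map_smul, norm_smul, Real.norm_of_nonneg h2j.le]
    calc (2 : ℝ) ^ j * ‖L (opComp U (j + 2) (k + 1) (ν j))‖
        ≤ 2 ^ j * (c (j + 2) * (θ (j + 1) / 2 ^ j * B)) := by
          gcongr
          exact (hc j hj _).trans (mul_le_mul_of_nonneg_left (hν j hj) (hc₀ _))
      _ = θ (j + 1) * c (j + 2) * B := by field_simp
  rw [hsum, div_mul_eq_mul_div, le_div_iff₀ h2, mul_comm]
  exact key

/-- The input of the `(k+1)`-st activation `Q (k + 1)` in the network `midNet`. -/
def preAct (U : ℕ → WithLp 2 (H × H) →L[ℝ] WithLp 2 (H × H))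
    (Q : ℕ → WithLp 2 (H × H) → WithLp 2 (H × H)) (U1 : H → WithLp 2 (H × H)) :
    ℕ → H → WithLp 2 (H × H)
  | 0 => U1
  | k + 1 => fun b => U (k + 2) (Q (k + 1) (preAct U Q U1 k b))

lemma midNet_succ (U : ℕ → WithLp 2 (H × H) →L[ℝ] WithLp 2 (H × H))
    (Q : ℕ → WithLp 2 (H × H) → WithLp 2 (H × H)) (U1 : H → WithLp 2 (H × H)) (k : ℕ) (b : H) :
    midNet U Q U1 (k + 1) b = Q (k + 1) (preAct U Q U1 k b) := by
  induction k with
  | zero => rfl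
  | succ k ih => simp only [midNet, preAct, ih]

lemma Qop_firm (R : ℕ → H → H) (n : ℕ)
    (hR : ∀ x y : H, ‖R n x - R n y‖ ^ 2 + ‖(x - R n x) - (y - R n y)‖ ^ 2 ≤ ‖x - y‖ ^ 2)
    (z w : WithLp 2 (H × H)) :
    ‖Qop R n z - Qop R n w‖ ^ 2 + ‖(z - w) - (Qop R n z - Qop R n w)‖ ^ 2 ≤ ‖z - w‖ ^ 2 := by
  have h1 : ‖Qop R n z - Qop R n w‖ ^ 2
      = ‖R n (fstL z) - R n (fstL w)‖ ^ 2 + ‖sndL z - sndL w‖ ^ 2 := norm_sq_prod _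
  have h2 : ‖(z - w) - (Qop R n z - Qop R n w)‖ ^ 2
      = ‖(fstL z - fstL w) - (R n (fstL z) - R n (fstL w))‖ ^ 2
        + ‖(sndL z - sndL w) - (sndL z - sndL w)‖ ^ 2 := norm_sq_prod _
  have h3 : ‖z - w‖ ^ 2 = ‖fstL z - fstL w‖ ^ 2 + ‖sndL z - sndL w‖ ^ 2 := norm_sq_prod _
  have h4 := hR (fstL z) (fstL w)
  rw [sub_sub_sub_comm] at h4
  rw [h1, h2, h3, sub_self (sndL z - sndL w), norm_zero]
  linarith

end Unrolling

theorem statement16 (m : ℕ) (hm : 1 ≤ m) [CompleteSpace H]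
    (v : HilbertBasis ℕ ℝ H)
    (W : ℕ → H →L[ℝ] H) (beta : ℕ → ℕ → ℝ) (lam eta : ℕ → ℝ)
    (hW : ∀ n, 1 ≤ n → n ≤ m → ∀ p : ℕ, W n (v p) = beta n p • v p)
    (hlam : ∀ n, 1 ≤ n → n ≤ m → 0 < lam n)
    (heta : ∀ n, 1 ≤ n → n ≤ m → 0 < eta n)
    (hm2 : 2 ≤ m)
    (R : ℕ → H → H)
    (hR : ∀ n, 1 ≤ n → n ≤ m → ∀ x y : H,
      ‖R n x - R n y‖ ^ 2 + ‖(x - R n x) - (y - R n y)‖ ^ 2 ≤ ‖x - y‖ ^ 2)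
    (θh : ℕ → ℝ)
    (hθh : ∀ n, 1 ≤ n → n ≤ m - 1 →
      θh n = Real.sqrt (⨆ p : ℕ,
          ((betaC beta 1 n p + betaT beta lam eta 1 n p) ^ 2 + etaP eta 1 n ^ 2))
        + ∑ i ∈ Finset.Icc 2 n, θh (i - 1) * Real.sqrt (aC beta lam eta i n))
    (hθhm : θh m = Real.sqrt (⨆ p : ℕ, (betaC beta 1 m p + betaT beta lam eta 1 m p) ^ 2)
        + ∑ i ∈ Finset.Icc 2 m, θh (i - 1) * Real.sqrt (aBar beta lam eta i m)) :
    ∀ b b' : H,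
      ‖R m (Ubar W lam m (midNet (Uop W lam eta) (Qop R) (⇑(Uhat1b W lam eta)) (m - 1) b))
          - R m (Ubar W lam m (midNet (Uop W lam eta) (Qop R) (⇑(Uhat1b W lam eta)) (m - 1) b'))‖
        ≤ θh m / 2 ^ (m - 1) * ‖b - b'‖ := by
  intro b b'
  set U := Uop W lam eta with hU
  set u := preAct U (Qop R) (⇑(Uhat1b W lam eta)) with hu
  -- `D k` is the difference of the inputs of the `(k+1)`-st activation, and `ν k` the difference
  -- of their images under the reflection `2 Q (k + 1) - Id`.
  let D : ℕ → WithLp 2 (H × H) := fun k => u k b - u k b'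
  let ν : ℕ → WithLp 2 (H × H) := fun k =>
    (2 : ℝ) • (Qop R (k + 1) (u k b) - Qop R (k + 1) (u k b')) - D k
  have hD : ∀ k, D (k + 1) = (1 / 2 : ℝ) • U (k + 2) (D k + ν k) := by
    intro k
    have : D k + ν k = (2 : ℝ) • (Qop R (k + 1) (u k b) - Qop R (k + 1) (u k b')) :=
      add_sub_cancel _ _
    rw [this, map_smul, smul_smul, map_sub]
    norm_num
    rfl
  have hνD : ∀ k, k + 1 ≤ m → ‖ν k‖ ≤ ‖D k‖ := fun k hk =>
    norm_reflect_le (Qop_firm R (k + 1) (hR (k + 1) (by omega) hk) _ _)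
  have hD0 : D 0 = Uhat1b W lam eta (b - b') := (map_sub (Uhat1b W lam eta) b b').symm
  have hDk : ∀ k, k + 1 ≤ m - 1 → ‖D k‖ ≤ θh (k + 1) / 2 ^ k * ‖b - b'‖ := by
    intro k
    induction k using Nat.strong_induction_on with
    | _ k ih =>
      intro hk
      rw [hθh (k + 1) (by omega) hk]
      refine unroll_norm_le (ContinuousLinearMap.id ℝ _) U D ν hD k _ _
        (fun i => Real.sqrt (aC beta lam eta i (k + 1))) θh ?_ (fun _ => Real.sqrt_nonneg _) ?_ ?_
      · rw [hD0]
        exact norm_opComp_Uhat1b_le v W beta lam eta hW k (by omega) _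
      · intro j hj z
        exact norm_opComp_le v W beta lam eta hW (j + 2) (k + 1) (by omega) (by omega) (by omega) z
      · intro j hj
        exact (hνD j (by omega)).trans (ih j hj (by omega))
  obtain ⟨k, rfl⟩ : ∃ k, m = k + 2 := ⟨m - 2, by omega⟩
  have hlast : ‖fstL (D (k + 1))‖ ≤ θh (k + 2) / 2 ^ (k + 1) * ‖b - b'‖ := by
    rw [hθhm]
    refine unroll_norm_le fstL U D ν hD (k + 1) _ _
      (fun i => Real.sqrt (aBar beta lam eta i (k + 2))) θh ?_ (fun _ => Real.sqrt_nonneg _) ?_ ?_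
    · rw [hD0]
      exact norm_fstL_opComp_Uhat1b_le v W beta lam eta hW (k + 1) le_rfl _
    · intro j hj z
      exact norm_fstL_opComp_le v W beta lam eta hW (j + 2) (k + 2) (by omega) (by omega) le_rfl z
    · intro j hj
      exact (hνD j (by omega)).trans (hDk j (by omega))
  -- `Ū_m` is the first component of `U_m`, so the last activation is applied to `fstL (u (k + 1) ·)`.
  have hUbar : ∀ c, Ubar W lam (k + 2) (midNet U (Qop R) (⇑(Uhat1b W lam eta)) (k + 2 - 1) c)
      = fstL (u (k + 1) c) := by
    intro c
    rw [show k + 2 - 1 = k + 1 from rfl, midNet_succ]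
    rfl
  rw [hUbar, hUbar]
  refine le_trans ?_ hlast
  have h := hR (k + 2) (by omega) le_rfl (fstL (u (k + 1) b)) (fstL (u (k + 1) b'))
  rw [show fstL (D (k + 1)) = fstL (u (k + 1) b) - fstL (u (k + 1) b') from map_sub _ _ _]
  refine (sq_le_sq₀ (norm_nonneg _) (norm_nonneg _)).1 (le_trans ?_ h)
  exact le_add_of_nonneg_right (sq_nonneg _)
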